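/- Let b > 0, K ∈ ℕ, and let ξ_0, ξ_1, …, ξ_K be i.i.d. random variables with law Laplace(0, b). Then for every real t with 0 ≤ t ≤ √((K+1)/2): P( | Σ_{k=0}^K ξ_k | ≥ 2√2 · t · √(K+1) · b ) ≤ 2 · exp(−t²). -/

import Mathlib

open MeasureTheory Real

/-- The Laplace distribution with location `m` and scale `b`. -/
noncomputable def laplace (m b : ℝ) : Measure ℝ :=
  volume.withDensity fun z => ENNReal.ofReal ((1 / (2 * b)) * Real.exp (-|z - m| / b))

open ProbabilityTheory

/-- The exponential moment of a centered Laplace distribution. -/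
theorem lintegral_exp_mul_laplace {b θ : ℝ} (hb : 0 < b) (hθ : |θ * b| < 1) :
    ∫⁻ z, ENNReal.ofReal (exp (θ * z)) ∂laplace 0 b =
      ENNReal.ofReal (1 / (1 - (θ * b) ^ 2)) := by
  obtain ⟨hlow, hupp⟩ := abs_lt.1 hθ
  have hneg : θ - 1 / b < 0 := by
    rw [sub_neg, lt_div_iff₀ hb]
    exact hupp
  have hpos : 0 < θ + 1 / b := by
    have : -θ < 1 / b := by
      rw [lt_div_iff₀ hb]
      linarith
    linarith
  rw [laplace, lintegral_withDensity_eq_lintegral_mul _ (by fun_prop) (by fun_prop),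
    ← lintegral_add_compl _ (measurableSet_Iic (a := (0 : ℝ))), Set.compl_Iic]
  simp only [Pi.mul_apply]
  have hleft : ∫⁻ z in Set.Iic (0 : ℝ),
      ENNReal.ofReal ((1 / (2 * b)) * exp (-|z - 0| / b)) * ENNReal.ofReal (exp (θ * z)) =
      ENNReal.ofReal (1 / (2 * b) * (1 / (θ + 1 / b))) := by
    rw [setLIntegral_congr_fun (g := fun z => ENNReal.ofReal (1 / (2 * b) *
        exp ((θ + 1 / b) * z))) measurableSet_Iic, ← ofReal_integral_eq_lintegral_ofReal
        ((integrableOn_exp_mul_Iic hpos 0).const_mul _) (ae_of_all _ fun z => by positivity),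
      integral_const_mul, integral_exp_mul_Iic hpos, mul_zero, exp_zero]
    intro z hz
    dsimp only
    rw [← ENNReal.ofReal_mul (by positivity), mul_assoc, ← exp_add, sub_zero,
      abs_of_nonpos hz]
    ring_nf
  have hright : ∫⁻ z in Set.Ioi (0 : ℝ),
      ENNReal.ofReal ((1 / (2 * b)) * exp (-|z - 0| / b)) * ENNReal.ofReal (exp (θ * z)) =
      ENNReal.ofReal (1 / (2 * b) * (-1 / (θ - 1 / b))) := by
    rw [setLIntegral_congr_fun (g := fun z => ENNReal.ofReal (1 / (2 * b) *
        exp ((θ - 1 / b) * z))) measurableSet_Ioi, ← ofReal_integral_eq_lintegral_ofReal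
        ((integrableOn_exp_mul_Ioi hneg 0).const_mul _) (ae_of_all _ fun z => by positivity),
      integral_const_mul, integral_exp_mul_Ioi hneg, mul_zero, exp_zero]
    intro z hz
    dsimp only
    rw [← ENNReal.ofReal_mul (by positivity), mul_assoc, ← exp_add, sub_zero,
      abs_of_pos hz]
    ring_nf
  have hright_nonneg : 0 ≤ -1 / (θ - 1 / b) := div_nonneg_of_nonpos (by norm_num) hneg.le
  rw [hleft, hright, ← ENNReal.ofReal_add (by positivity) (by positivity)]
  congr 1
  have hadd : θ + 1 / b = (1 + θ * b) / b := by field_simp; ring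
  have hsub : θ - 1 / b = -((1 - θ * b) / b) := by field_simp; ring
  have hadd_ne : 1 + θ * b ≠ 0 := by linarith
  have hsub_ne : 1 - θ * b ≠ 0 := by linarith
  have hsq : 1 - (θ * b) ^ 2 = (1 + θ * b) * (1 - θ * b) := by ring
  rw [hadd, hsub, hsq, div_neg]
  generalize θ * b = u at hadd_ne hsub_ne
  field_simp
  ring

theorem isProbabilityMeasure_laplace {b : ℝ} (hb : 0 < b) :
    IsProbabilityMeasure (laplace 0 b) :=
  ⟨by simpa using lintegral_exp_mul_laplace (θ := 0) hb (by simp)⟩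

theorem integrable_exp_mul_laplace {b θ : ℝ} (hb : 0 < b) (hθ : |θ * b| < 1) :
    Integrable (fun z => exp (θ * z)) (laplace 0 b) := by
  rw [← lintegral_ofReal_ne_top_iff_integrable (by fun_prop)
    (ae_of_all _ fun z => (exp_pos _).le), lintegral_exp_mul_laplace hb hθ]
  exact ENNReal.ofReal_ne_top

theorem mgf_laplace {b θ : ℝ} (hb : 0 < b) (hθ : |θ * b| < 1) :
    mgf id (laplace 0 b) θ = 1 / (1 - (θ * b) ^ 2) := by
  have hsq : (θ * b) ^ 2 < 1 := (sq_lt_one_iff_abs_lt_one _).2 hθ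
  rw [mgf, integral_eq_lintegral_of_nonneg_ae (ae_of_all _ fun z => (exp_pos _).le) (by fun_prop)]
  simp only [id]
  rw [lintegral_exp_mul_laplace hb hθ, ENNReal.toReal_ofReal]
  exact one_div_nonneg.2 (by linarith)

theorem one_div_one_sub_le_exp_two_mul {x : ℝ} (hx : 0 ≤ x) (hx' : x ≤ 1 / 2) :
    1 / (1 - x) ≤ exp (2 * x) := by
  rw [div_le_iff₀ (by linarith)]
  nlinarith [add_one_le_exp (2 * x)]

/-- The moment generating function of a sum of independent centered Laplace variables is
sub-Gaussian in a neighbourhood of the origin. -/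
theorem mgf_sum_laplace_le {ι : Type*} [Fintype ι] {b θ : ℝ} (hb : 0 < b)
    (hθ : (θ * b) ^ 2 ≤ 1 / 2) :
    Integrable (fun ξ : ι → ℝ => exp (θ * ∑ k, ξ k)) (Measure.pi fun _ => laplace 0 b) ∧
      mgf (fun ξ : ι → ℝ => ∑ k, ξ k) (Measure.pi fun _ => laplace 0 b) θ ≤
        exp (2 * Fintype.card ι * (θ * b) ^ 2) := by
  have := isProbabilityMeasure_laplace hb
  have habs : |θ * b| < 1 := (sq_lt_one_iff_abs_lt_one _).1 (by linarith)
  set μ := Measure.pi fun _ : ι => laplace 0 b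
  have hindep : iIndepFun (fun (k : ι) (ξ : ι → ℝ) => ξ k) μ :=
    iIndepFun_pi (X := fun _ => id) fun _ => aemeasurable_id
  have heval (k : ι) : MeasurePreserving (fun ξ : ι → ℝ => ξ k) μ (laplace 0 b) :=
    measurePreserving_eval _ k
  have hsum : (fun ξ : ι → ℝ => ∑ k, ξ k) = ∑ k, fun ξ : ι → ℝ => ξ k := by
    ext ξ
    simp
  constructor
  · have := hindep.integrable_exp_mul_sum (t := θ) (s := Finset.univ) (by fun_prop) fun k _ =>
      (heval k).integrable_comp_of_integrable (integrable_exp_mul_laplace hb habs)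
    simpa using this
  · have hmgf (k : ι) : mgf (fun ξ : ι → ℝ => ξ k) μ θ = 1 / (1 - (θ * b) ^ 2) := by
      rw [← mgf_id_map (heval k).aemeasurable, (heval k).map_eq, mgf_laplace hb habs]
    rw [hsum, hindep.mgf_sum (by fun_prop)]
    simp only [hmgf, Finset.prod_const, Finset.card_univ]
    calc (1 / (1 - (θ * b) ^ 2)) ^ Fintype.card ι
        ≤ exp (2 * (θ * b) ^ 2) ^ Fintype.card ι := by
          gcongr
          · exact one_div_nonneg.2 (by linarith)
          · exact one_div_one_sub_le_exp_two_mul (sq_nonneg _) hθ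
      _ = exp (2 * Fintype.card ι * (θ * b) ^ 2) := by
          rw [← exp_nat_mul]
          ring_nf

/-- Bernstein-type tail bound for a sum of `K+1` i.i.d. centered Laplace
variables with scale `b`: for `0 ≤ t ≤ √((K+1)/2)`,
`P(|Σ ξ_k| ≥ 2√2 t √(K+1) b) ≤ 2 exp(−t²)`. -/
theorem laplace_sum_tail_bound
    (b : ℝ) (hb : 0 < b) (K : ℕ) (t : ℝ) (ht : 0 ≤ t)
    (ht' : t ≤ Real.sqrt (((K : ℝ) + 1) / 2)) :
    (Measure.pi fun _ : Fin (K + 1) => laplace 0 b)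
        {ξ | 2 * Real.sqrt 2 * t * Real.sqrt ((K : ℝ) + 1) * b ≤ |∑ k, ξ k|} ≤
      ENNReal.ofReal (2 * Real.exp (-t ^ 2)) := by
  have := isProbabilityMeasure_laplace hb
  set μ := Measure.pi fun _ : Fin (K + 1) => laplace 0 b
  have hn : (0 : ℝ) < K + 1 := by positivity
  set r := √((K : ℝ) + 1)
  set s := 2 * √2 * t * r * b with hs
  have hr_pos : 0 < r := sqrt_pos.2 hn
  have hr_sq : r ^ 2 = K + 1 := sq_sqrt hn.le
  have ht_sq : t ^ 2 ≤ r ^ 2 / 2 := by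
    rw [hr_sq]
    exact (le_sqrt ht (by positivity)).1 ht'
  have htwo : √2 ^ 2 = (2 : ℝ) := sq_sqrt (by norm_num)
  -- the optimal parameter in the Chernoff bound
  set θ := t / (√2 * r * b) with hθ
  have hθ_nonneg : 0 ≤ θ := by positivity
  have hθb : (θ * b) ^ 2 = t ^ 2 / (2 * r ^ 2) := by
    rw [hθ, show t / (√2 * r * b) * b = t / (√2 * r) by field_simp, div_pow, mul_pow, htwo]
  have hθb_le : (θ * b) ^ 2 ≤ 1 / 2 := by
    rw [hθb, div_le_iff₀ (by positivity)]
    nlinarith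
  have hexp : -θ * s + 2 * Fintype.card (Fin (K + 1)) * (θ * b) ^ 2 = -t ^ 2 := by
    have hθs : θ * s = 2 * t ^ 2 := by
      rw [hθ, hs]
      field_simp
    rw [hθb, Fintype.card_fin, neg_mul, hθs]
    push_cast
    rw [← hr_sq]
    field_simp
    ring
  have hupper : μ.real {ξ | s ≤ ∑ k, ξ k} ≤ exp (-t ^ 2) := by
    obtain ⟨hint, hmgf⟩ := mgf_sum_laplace_le (ι := Fin (K + 1)) hb hθb_le
    refine (measure_ge_le_exp_mul_mgf s hθ_nonneg hint).trans ?_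
    rw [← hexp, exp_add]
    gcongr
  have hlower : μ.real {ξ | ∑ k, ξ k ≤ -s} ≤ exp (-t ^ 2) := by
    obtain ⟨hint, hmgf⟩ := mgf_sum_laplace_le (ι := Fin (K + 1)) (θ := -θ) hb
      (by rwa [neg_mul, neg_sq])
    refine (measure_le_le_exp_mul_mgf (-s) (neg_nonpos.2 hθ_nonneg) hint).trans ?_
    rw [neg_mul, neg_sq] at hmgf
    rw [← hexp, exp_add, neg_neg, mul_neg, ← neg_mul]
    gcongr
  have hsubset : {ξ : Fin (K + 1) → ℝ | s ≤ |∑ k, ξ k|} ⊆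
      {ξ | s ≤ ∑ k, ξ k} ∪ {ξ | ∑ k, ξ k ≤ -s} := by
    intro ξ hξ
    simp only [Set.mem_union, Set.mem_ofPred_eq] at hξ ⊢
    exact (le_abs.1 hξ).imp_right le_neg.1
  rw [← ofReal_measureReal]
  refine ENNReal.ofReal_le_ofReal ?_
  calc μ.real {ξ | s ≤ |∑ k, ξ k|}
      ≤ μ.real {ξ | s ≤ ∑ k, ξ k} + μ.real {ξ | ∑ k, ξ k ≤ -s} :=
        (measureReal_mono hsubset).trans (measureReal_union_le _ _)
    _ ≤ 2 * exp (-t ^ 2) := by linarith
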